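/- arXiv:2508.21744 — 2 statements merged into one kernel-verified Lean document; each statement's English description precedes it below -/
import Mathlib

section
/- Let F = ρ + Δ be a b-space Finsler norm on ℝ^n and let y ∈ ℝ^n ∖ ℝb be a point at which the matrix (g_{jk}(y)) is invertible, Δ(y) + ‖b‖² ρ(y) ≠ 0, and κ_b := n + 1 − (n − 2) F (F − Δ) ‖b‖² / ( Δ (Δ + (F − Δ) ‖b‖²) ) is nonzero. Then the characteristic tensor vanishes at y: for all indices j, k, l, B_{jkl} := C_{jkl} − (1/κ_b) Σ_{(jkl)} I_j ( h_{kl} − (F²/Δ) Δ_{kl} ) = 0, where Σ_{(jkl)} denotes the sum over the three cyclic permutations of (j,k,l). -/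
/-!
Both `ρ = ‖y‖` and `Δ = ±‖b‖ ‖y_⊥‖` are square roots of quadratic forms up to sign, so their third
derivatives are expressed through the first two: `ρ ρ_{jkl} = -Σ ρ_{jk} ρ_l`, and likewise for `Δ`
(`pd_root`). Inserting this into the third derivative of `(ρ + Δ)²` gives (`cartan_formula`)
`2 C_{jkl} = Σ m_j T_{kl}`, with `m_j = ρ Δ_j - Δ ρ_j` and `T_{kl} = ρ_{kl}/ρ - Δ_{kl}/Δ`. Moreover
`h_{kl} - (F²/Δ) Δ_{kl} = F ρ T_{kl}`, so the claim amounts to `I_j = κ_b m_j / (2 F ρ)`.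

To compute `I`, let `t` be the unit vector orthogonal to `y` in the plane spanned by `b` and `y`,
`Q` the orthogonal projection onto the complement of that plane, and `ψ_j = F_j`. Then `m` is a
multiple of `t`, `T = ν Q + ρ⁻² t tᵀ` and `g = ψ ψᵀ + μ Q + (F/ρ) t tᵀ`, where
`μ = F (1/ρ + ‖b‖²/Δ)` is nonzero exactly because `Δ + ‖b‖² ρ ≠ 0`. Since `g⁻¹ψ = y/F` and `g⁻¹t`
lies in the plane, where `Q` vanishes, all contractions with `g⁻¹` are explicit
(`inverse_contractions`): the trace of `g⁻¹ T` is `(n - 2) ν/μ + 1/(ρF)` and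
`T g⁻¹ t = t/(ρF)`. Adding up gives `κ_b` (`pointwise_identity`).
-/

open scoped RealInnerProductSpace

/-- Partial derivative in the `j`-th standard coordinate direction. -/
noncomputable def pd {n : ℕ} (f : EuclideanSpace ℝ (Fin n) → ℝ) (j : Fin n) :
    EuclideanSpace ℝ (Fin n) → ℝ :=
  fun y => fderiv ℝ f y (EuclideanSpace.single j (1 : ℝ))

/-- Cartan torsion `C_{jkl} = ¼ ∂³(F²)/∂y^j∂y^k∂y^l`. -/
noncomputable def Cart {n : ℕ} (F : EuclideanSpace ℝ (Fin n) → ℝ)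
    (y : EuclideanSpace ℝ (Fin n)) (j k l : Fin n) : ℝ :=
  (1/4 : ℝ) * pd (pd (pd (fun z => (F z)^2) j) k) l y

/-- Angular metric `h_{kl} = F F_{kl}`. -/
noncomputable def ang {n : ℕ} (F : EuclideanSpace ℝ (Fin n) → ℝ)
    (y : EuclideanSpace ℝ (Fin n)) (k l : Fin n) : ℝ :=
  F y * pd (pd F k) l y

/-- Mean Cartan torsion `I_j = g^{kl} C_{jkl}`. -/
noncomputable def meanC {n : ℕ} (g : Matrix (Fin n) (Fin n) ℝ)
    (F : EuclideanSpace ℝ (Fin n) → ℝ) (y : EuclideanSpace ℝ (Fin n)) (j : Fin n) : ℝ :=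
  ∑ k, ∑ l, g⁻¹ k l * Cart F y j k l

/-! ### Calculus of coordinate partial derivatives -/

theorem pd_congr {n : ℕ} {U : Set (EuclideanSpace ℝ (Fin n))} (hU : IsOpen U)
    {f g : EuclideanSpace ℝ (Fin n) → ℝ} (h : ∀ z ∈ U, f z = g z) (j : Fin n)
    {z : EuclideanSpace ℝ (Fin n)} (hz : z ∈ U) : pd f j z = pd g j z := by
  unfold pd
  rw [Filter.EventuallyEq.fderiv_eq (Filter.mem_of_superset (hU.mem_nhds hz) h)]

theorem diff_congr {n : ℕ} {U : Set (EuclideanSpace ℝ (Fin n))} (hU : IsOpen U)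
    {f g : EuclideanSpace ℝ (Fin n) → ℝ} (h : ∀ z ∈ U, f z = g z)
    {z : EuclideanSpace ℝ (Fin n)} (hz : z ∈ U) (hg : DifferentiableAt ℝ g z) :
    DifferentiableAt ℝ f z :=
  hg.congr_of_eventuallyEq (Filter.mem_of_superset (hU.mem_nhds hz) h)

theorem pd_add {n : ℕ} {f g : EuclideanSpace ℝ (Fin n) → ℝ} {z : EuclideanSpace ℝ (Fin n)}
    (hf : DifferentiableAt ℝ f z) (hg : DifferentiableAt ℝ g z) (j : Fin n) :
    pd (fun x => f x + g x) j z = pd f j z + pd g j z := by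
  simp [pd, fderiv_fun_add hf hg]

theorem pd_sub {n : ℕ} {f g : EuclideanSpace ℝ (Fin n) → ℝ} {z : EuclideanSpace ℝ (Fin n)}
    (hf : DifferentiableAt ℝ f z) (hg : DifferentiableAt ℝ g z) (j : Fin n) :
    pd (fun x => f x - g x) j z = pd f j z - pd g j z := by
  simp [pd, fderiv_fun_sub hf hg]

theorem pd_mul {n : ℕ} {f g : EuclideanSpace ℝ (Fin n) → ℝ} {z : EuclideanSpace ℝ (Fin n)}
    (hf : DifferentiableAt ℝ f z) (hg : DifferentiableAt ℝ g z) (j : Fin n) :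
    pd (fun x => f x * g x) j z = f z * pd g j z + pd f j z * g z := by
  simp [pd, fderiv_fun_mul hf hg]; ring

theorem diff_div {n : ℕ} {f g : EuclideanSpace ℝ (Fin n) → ℝ} {z : EuclideanSpace ℝ (Fin n)}
    (hf : DifferentiableAt ℝ f z) (hg : DifferentiableAt ℝ g z) (h0 : g z ≠ 0) :
    DifferentiableAt ℝ (fun x => f x / g x) z := by
  simpa only [div_eq_mul_inv] using hf.fun_mul (hg.fun_inv h0)

theorem pd_div {n : ℕ} {f g : EuclideanSpace ℝ (Fin n) → ℝ} {z : EuclideanSpace ℝ (Fin n)}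
    (hf : DifferentiableAt ℝ f z) (hg : DifferentiableAt ℝ g z) (h0 : g z ≠ 0) (j : Fin n) :
    pd (fun x => f x / g x) j z = (pd f j z - f z / g z * pd g j z) / g z := by
  have h := pd_mul (z := z) (diff_div hf hg h0) hg j
  have hopen : ∀ᶠ x in nhds z, f x / g x * g x = f x := by
    filter_upwards [hg.continuousAt.eventually_ne h0] with x hx
    field_simp
  have h2 : pd (fun x => f x / g x * g x) j z = pd f j z := by
    unfold pd
    rw [Filter.EventuallyEq.fderiv_eq hopen]
  rw [h2] at h
  rw [h]; field_simp; ring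

theorem pd_const {n : ℕ} (c : ℝ) (j : Fin n) (z : EuclideanSpace ℝ (Fin n)) :
    pd (fun _ => c) j z = 0 := by
  simp [pd]

/-! ### Square roots of quadratic forms -/

/-- If `f² / 2` has partial derivatives given by linear forms `A j` on `U`, then its third derivatives
vanish there, which expresses the third partial derivatives of `f` through the lower ones. -/
theorem pd_root {n : ℕ} {U : Set (EuclideanSpace ℝ (Fin n))} (hU : IsOpen U)
    (f : EuclideanSpace ℝ (Fin n) → ℝ) (A : Fin n → EuclideanSpace ℝ (Fin n) →L[ℝ] ℝ)
    (h0 : ∀ z ∈ U, f z ≠ 0) (hd : ∀ z ∈ U, DifferentiableAt ℝ f z)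
    (h1 : ∀ z ∈ U, ∀ j, pd f j z = A j z / f z) :
    (∀ j, ∀ z ∈ U, DifferentiableAt ℝ (pd f j) z) ∧
    (∀ j k, ∀ z ∈ U, DifferentiableAt ℝ (pd (pd f j) k) z) ∧
    (∀ j k, ∀ z ∈ U, pd (pd f j) k z
      = (A j (EuclideanSpace.single k 1) - pd f j z * pd f k z) / f z) ∧
    (∀ j k l, ∀ z ∈ U, pd (pd (pd f j) k) l z
      = -(pd (pd f j) k z * pd f l z + pd (pd f k) l z * pd f j z
          + pd (pd f j) l z * pd f k z) / f z) := by
  have d1 : ∀ j, ∀ z ∈ U, DifferentiableAt ℝ (pd f j) z := fun j z hz =>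
    diff_congr hU (fun x hx => h1 x hx j) hz
      (diff_div (A j).differentiableAt (hd z hz) (h0 z hz))
  have e2 : ∀ j k, ∀ z ∈ U, pd (pd f j) k z
      = (A j (EuclideanSpace.single k 1) - pd f j z * pd f k z) / f z := by
    intro j k z hz
    rw [pd_congr hU (fun x hx => h1 x hx j) k hz,
      pd_div (A j).differentiableAt (hd z hz) (h0 z hz), ← h1 z hz j]
    congr 2
    simp [pd]
  have dn : ∀ j k, ∀ z ∈ U, DifferentiableAt ℝ
      (fun z => A j (EuclideanSpace.single k 1) - pd f j z * pd f k z) z := fun j k z hz =>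
    (differentiableAt_const _).fun_sub ((d1 j z hz).fun_mul (d1 k z hz))
  refine ⟨d1, fun j k z hz => diff_congr hU (e2 j k) hz
    (diff_div (dn j k z hz) (hd z hz) (h0 z hz)), e2, fun j k l z hz => ?_⟩
  rw [pd_congr hU (e2 j k) l hz, pd_div (dn j k z hz) (hd z hz) (h0 z hz), ← e2 j k z hz,
    pd_sub (differentiableAt_const _) ((d1 j z hz).fun_mul (d1 k z hz)), pd_const,
    pd_mul (d1 j z hz) (d1 k z hz)]
  ring

/-- For `f = c ‖L z‖` the product `f f_j` is linear in `z`, as `pd_root` requires. This covers `ρ`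
(`c = 1`, `L = id`) and `Δ` (`c = ±‖b‖`, `L` the projection onto `b^⊥`). -/
theorem pd_cnorm {n : ℕ} (c : ℝ)
    (L : EuclideanSpace ℝ (Fin n) →L[ℝ] EuclideanSpace ℝ (Fin n))
    (f : EuclideanSpace ℝ (Fin n) → ℝ) (hf : ∀ z, f z = c * ‖L z‖)
    (z : EuclideanSpace ℝ (Fin n)) (hz : L z ≠ 0) :
    DifferentiableAt ℝ f z ∧ ∀ j, pd f j z
      = (c ^ 2 • (innerSL ℝ (L (EuclideanSpace.single j 1))).comp L) z / f z := by
  obtain rfl : f = fun z => c * ‖L z‖ := funext hf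
  have hn : ‖L z‖ ≠ 0 := norm_ne_zero_iff.2 hz
  have hd : DifferentiableAt ℝ (fun z => ‖L z‖) z := L.differentiableAt.norm ℝ hz
  refine ⟨hd.const_mul c, fun j => ?_⟩
  have hsq : pd (fun x => ‖L x‖ * ‖L x‖) j z
      = 2 * inner ℝ (L (EuclideanSpace.single j 1)) (L z) := by
    have : (fun x => ‖L x‖ * ‖L x‖) = fun x => inner ℝ (L x) (L x) := by
      funext x; rw [real_inner_self_eq_norm_mul_norm]
    rw [this, pd, fderiv_inner_apply ℝ L.differentiableAt L.differentiableAt,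
      ContinuousLinearMap.fderiv, real_inner_comm]
    ring
  rw [pd_mul hd hd] at hsq
  rw [pd_mul (differentiableAt_const c) hd, pd_const]
  simp only [smul_apply, ContinuousLinearMap.comp_apply, innerSL_apply_apply,
    smul_eq_mul]
  field_simp
  linear_combination (c / 2) * hsq

/-- The derivatives entering the fundamental tensor and Cartan torsion of `F = r + d`, where `r` and
`d` are locally square roots of quadratic forms. The Cartan torsion is
governed by the covector `r d_j - d r_j` and the symmetric tensor `r_{kl}/r - d_{kl}/d`. -/
theorem cartan_formula {n : ℕ} {U : Set (EuclideanSpace ℝ (Fin n))} (hU : IsOpen U)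
    (r d F : EuclideanSpace ℝ (Fin n) → ℝ) (A B : Fin n → EuclideanSpace ℝ (Fin n) →L[ℝ] ℝ)
    (hF : ∀ z, F z = r z + d z)
    (r0 : ∀ z ∈ U, r z ≠ 0) (rd : ∀ z ∈ U, DifferentiableAt ℝ r z)
    (r1 : ∀ z ∈ U, ∀ j, pd r j z = A j z / r z)
    (d0 : ∀ z ∈ U, d z ≠ 0) (dd : ∀ z ∈ U, DifferentiableAt ℝ d z)
    (d1 : ∀ z ∈ U, ∀ j, pd d j z = B j z / d z)
    (y : EuclideanSpace ℝ (Fin n)) (hy : y ∈ U) :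
    (∀ j k, pd (pd F j) k y = pd (pd r j) k y + pd (pd d j) k y) ∧
    (∀ j k, pd (pd (fun z => (F z) ^ 2) j) k y =
      2 * ((pd r j y + pd d j y) * (pd r k y + pd d k y)
        + F y * (pd (pd r j) k y + pd (pd d j) k y))) ∧
    (∀ j k, pd (pd r j) k y
      = (A j (EuclideanSpace.single k 1) - pd r j y * pd r k y) / r y) ∧
    (∀ j k, pd (pd d j) k y
      = (B j (EuclideanSpace.single k 1) - pd d j y * pd d k y) / d y) ∧
    (∀ j k l, Cart F y j k l = (1 / 2) *
      ((r y * pd d j y - d y * pd r j y) * (pd (pd r k) l y / r y - pd (pd d k) l y / d y)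
      + (r y * pd d k y - d y * pd r k y) * (pd (pd r j) l y / r y - pd (pd d j) l y / d y)
      + (r y * pd d l y - d y * pd r l y) * (pd (pd r j) k y / r y - pd (pd d j) k y / d y))) := by
  obtain rfl : F = fun z => r z + d z := funext hF
  obtain ⟨ra, rb, r2, r3⟩ := pd_root hU r A r0 rd r1
  obtain ⟨da, db, d2, d3⟩ := pd_root hU d B d0 dd d1
  have F1 : ∀ j, ∀ z ∈ U, pd (fun z => r z + d z) j z = pd r j z + pd d j z :=
    fun j z hz => pd_add (rd z hz) (dd z hz) j
  have F2 : ∀ j k, ∀ z ∈ U, pd (pd (fun z => r z + d z) j) k z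
      = pd (pd r j) k z + pd (pd d j) k z := fun j k z hz => by
    rw [pd_congr hU (F1 j) k hz, pd_add (ra j z hz) (da j z hz)]
  have Fd : ∀ z ∈ U, DifferentiableAt ℝ (fun z => r z + d z) z :=
    fun z hz => (rd z hz).fun_add (dd z hz)
  have Fa : ∀ j, ∀ z ∈ U, DifferentiableAt ℝ (fun z => pd r j z + pd d j z) z :=
    fun j z hz => (ra j z hz).fun_add (da j z hz)
  have Fb : ∀ j k, ∀ z ∈ U,
      DifferentiableAt ℝ (fun z => pd (pd r j) k z + pd (pd d j) k z) z :=
    fun j k z hz => (rb j k z hz).fun_add (db j k z hz)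
  have S1 : ∀ j, ∀ z ∈ U, pd (fun z => (r z + d z) ^ 2) j z
      = 2 * ((r z + d z) * (pd r j z + pd d j z)) := fun j z hz => by
    have : (fun z => (r z + d z) ^ 2) = fun z => (r z + d z) * (r z + d z) := by
      funext x; ring
    rw [this, pd_mul (Fd z hz) (Fd z hz), F1 j z hz]; ring
  have S2 : ∀ j k, ∀ z ∈ U, pd (pd (fun z => (r z + d z) ^ 2) j) k z
      = 2 * ((pd r j z + pd d j z) * (pd r k z + pd d k z)
        + (r z + d z) * (pd (pd r j) k z + pd (pd d j) k z)) := fun j k z hz => by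
    rw [pd_congr hU (S1 j) k hz, pd_mul (differentiableAt_const _) ((Fd z hz).fun_mul (Fa j z hz)),
      pd_mul (Fd z hz) (Fa j z hz), F1 k z hz, pd_const,
      pd_add (ra j z hz) (da j z hz)]
    ring
  refine ⟨fun j k => F2 j k y hy, fun j k => S2 j k y hy, fun j k => r2 j k y hy,
    fun j k => d2 j k y hy, fun j k l => ?_⟩
  have m1 := (Fa j y hy).fun_mul (Fa k y hy)
  have m2 := (Fd y hy).fun_mul (Fb j k y hy)
  rw [Cart, pd_congr hU (S2 j k) l hy, pd_mul (differentiableAt_const _) (m1.fun_add m2),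
    pd_add m1 m2, pd_mul (Fa j y hy) (Fa k y hy), pd_mul (Fd y hy) (Fb j k y hy),
    pd_const, F1 l y hy, pd_add (ra j y hy) (da j y hy), pd_add (ra k y hy) (da k y hy),
    pd_add (rb j k y hy) (db j k y hy), r3 j k l y hy, d3 j k l y hy]
  have := r0 y hy
  have := d0 y hy
  field_simp
  ring

/-! ### Algebra at a fixed point -/

open Matrix in
/-- Contractions with the inverse of `g = ψψᵀ + μ Q + (F/ρ) ttᵀ`, where `Q` annihilates the plane
spanned by `t` and `y`: the trace of `g⁻¹ T`, and `T g⁻¹ t` in both index orders. -/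
theorem inverse_contractions {n : ℕ} (g Q T : Matrix (Fin n) (Fin n) ℝ) (t y ψ : Fin n → ℝ)
    (F ρ μ ν : ℝ)
    (hg : g = vecMulVec ψ ψ + μ • Q + (F / ρ) • vecMulVec t t)
    (hT : T = ν • Q + (1 / ρ ^ 2) • vecMulVec t t)
    (hQ : Qᵀ = Q) (Qy : Q *ᵥ y = 0) (Qt : Q *ᵥ t = 0)
    (tt : t ⬝ᵥ t = 1) (ty : t ⬝ᵥ y = 0) (ψy : ψ ⬝ᵥ y = F)
    (hF : F ≠ 0) (hρ : ρ ≠ 0) (hμ : μ ≠ 0) (hdet : IsUnit g.det) :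
    (∑ k, ∑ l, g⁻¹ k l * T k l = (n - 2) * (ν / μ) + 1 / (ρ * F)) ∧
    (∀ j, ∑ k, ∑ l, g⁻¹ k l * (t k * T j l) = t j / (ρ * F)) ∧
    (∀ j, ∑ k, ∑ l, g⁻¹ k l * (t l * T j k) = t j / (ρ * F)) := by
  have hgT : gᵀ = g := by
    rw [hg]; simp [Matrix.transpose_add, Matrix.transpose_vecMulVec, hQ]
  have hiT : (g⁻¹)ᵀ = g⁻¹ := by rw [Matrix.transpose_nonsing_inv, hgT]
  have isym : ∀ k l, g⁻¹ k l = g⁻¹ l k := fun k l => by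
    conv_lhs => rw [← hiT]
    rfl
  have inv_of : ∀ u w, g *ᵥ u = w → g⁻¹ *ᵥ w = u := fun u w h => by
    rw [← h, Matrix.mulVec_mulVec, Matrix.nonsing_inv_mul _ hdet, Matrix.one_mulVec]
  set v : Fin n → ℝ := (ρ / F) • (t - ((ψ ⬝ᵥ t) / F) • y) with hv
  have hgy : g *ᵥ y = F • ψ := by
    rw [hg]
    simp only [Matrix.add_mulVec, Matrix.smul_mulVec, Qy, Matrix.vecMulVec_mulVec, ψy, ty]
    simp
  have hgt : g *ᵥ t = (ψ ⬝ᵥ t) • ψ + (F / ρ) • t := by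
    rw [hg]
    simp only [Matrix.add_mulVec, Matrix.smul_mulVec, Qt, Matrix.vecMulVec_mulVec, tt]
    simp
  have iψ : g⁻¹ *ᵥ ψ = F⁻¹ • y := inv_of _ _ (by
    rw [Matrix.mulVec_smul, hgy, smul_smul, inv_mul_cancel₀ hF, one_smul])
  have it : g⁻¹ *ᵥ t = v := inv_of _ _ (by
    rw [hv, Matrix.mulVec_smul, Matrix.mulVec_sub, Matrix.mulVec_smul, hgy, hgt]
    ext i
    simp only [Pi.smul_apply, Pi.sub_apply, Pi.add_apply, smul_eq_mul]
    field_simp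
    ring)
  have tv : t ⬝ᵥ v = ρ / F := by
    rw [hv, dotProduct_smul, dotProduct_sub, dotProduct_smul, tt, ty]; simp
  have Tv : T *ᵥ v = (1 / (ρ * F)) • t := by
    have Qv : Q *ᵥ v = 0 := by
      rw [hv, Matrix.mulVec_smul, Matrix.mulVec_sub, Matrix.mulVec_smul, Qy, Qt]; simp
    rw [hT]
    simp only [Matrix.add_mulVec, Matrix.smul_mulVec, Qv, Matrix.vecMulVec_mulVec, tv]
    ext i
    simp
    field_simp
  have c2 : ∀ j, ∑ k, ∑ l, g⁻¹ k l * (t l * T j k) = t j / (ρ * F) := fun j => by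
    have h := congrFun Tv j
    rw [← it] at h
    simp only [Matrix.mulVec, dotProduct, Pi.smul_apply, smul_eq_mul] at h
    rw [show t j / (ρ * F) = 1 / (ρ * F) * t j by ring, ← h]
    refine Finset.sum_congr rfl fun k _ => ?_
    rw [Finset.mul_sum]
    exact Finset.sum_congr rfl fun l _ => by ring
  have bil : ∀ w : Fin n → ℝ, ∑ k, ∑ l, g⁻¹ k l * (w k * w l) = w ⬝ᵥ (g⁻¹ *ᵥ w) := fun w => by
    simp only [Matrix.mulVec, dotProduct, Finset.mul_sum]
    exact Finset.sum_congr rfl fun k _ => Finset.sum_congr rfl fun l _ => by ring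
  have tr : ∑ k, ∑ l, g⁻¹ k l * g k l = (n : ℝ) := by
    have h : (g⁻¹ * g).trace = n := by
      rw [Matrix.nonsing_inv_mul _ hdet]; simp
    rw [← h]
    simp only [Matrix.trace, Matrix.diag, Matrix.mul_apply]
    refine Finset.sum_congr rfl fun k _ => Finset.sum_congr rfl fun l _ => ?_
    rw [show g k l = g l k from congrFun (congrFun hgT l) k]
  refine ⟨?_, fun j => ?_, c2⟩
  · -- `T` is `ν / μ` times `g` modulo multiples of `ψψᵀ` and `ttᵀ`.
    have hTg : ∀ k l, T k l = ν / μ * g k l - ν / μ * (ψ k * ψ l)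
        + (1 / ρ ^ 2 - ν / μ * (F / ρ)) * (t k * t l) := fun k l => by
      rw [hT, hg]
      simp [Matrix.vecMulVec_apply]
      field_simp
      ring
    have hsum : ∑ k, ∑ l, g⁻¹ k l * T k l
        = ν / μ * (∑ k, ∑ l, g⁻¹ k l * g k l) - ν / μ * (∑ k, ∑ l, g⁻¹ k l * (ψ k * ψ l))
          + (1 / ρ ^ 2 - ν / μ * (F / ρ)) * (∑ k, ∑ l, g⁻¹ k l * (t k * t l)) := by
      simp only [Finset.mul_sum, ← Finset.sum_sub_distrib, ← Finset.sum_add_distrib]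
      refine Finset.sum_congr rfl fun k _ => Finset.sum_congr rfl fun l _ => ?_
      rw [hTg]; ring
    rw [hsum, tr, bil, bil, iψ, it, tv, dotProduct_smul, ψy]
    simp only [smul_eq_mul]
    field_simp
    ring
  · rw [← c2 j, Finset.sum_comm]
    exact Finset.sum_congr rfl fun k _ => Finset.sum_congr rfl fun l _ => by rw [isym]

open Matrix in
/-- The vanishing of the characteristic tensor, as an algebraic identity at one point. Here
`e = b/‖b‖`, `s = y_⊥/‖y_⊥‖`, `a = ⟨e, y⟩`, `σ = ‖y_⊥‖`, `ρ = ‖y‖`, `c = ±‖b‖` and `d = Δ(y) = c σ`,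
while `R` and `D` stand for the Hessians of `ρ` and `Δ`, and `C` for the Cartan torsion. -/
theorem pointwise_identity {n : ℕ} (e s y r1 d1 : Fin n → ℝ) (a σ ρ c d F : ℝ)
    (g R D : Matrix (Fin n) (Fin n) ℝ) (C : Fin n → Fin n → Fin n → ℝ)
    (ee : e ⬝ᵥ e = 1) (ss : s ⬝ᵥ s = 1) (es : e ⬝ᵥ s = 0)
    (hy : ∀ k, y k = a * e k + σ * s k) (hρ2 : ρ ^ 2 = a ^ 2 + σ ^ 2)
    (hρ : ρ ≠ 0) (hσ : σ ≠ 0) (hc : c ≠ 0) (hd : d = c * σ) (hF : F = ρ + d) (hF0 : F ≠ 0)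
    (hD0 : d + c ^ 2 * ρ ≠ 0)
    (hr1 : ∀ k, r1 k = y k / ρ) (hd1 : ∀ k, d1 k = c * s k)
    (hR : ∀ k l, R k l = ((1 : Matrix (Fin n) (Fin n) ℝ) k l - r1 k * r1 l) / ρ)
    (hD : ∀ k l, D k l
      = (c ^ 2 * ((1 : Matrix (Fin n) (Fin n) ℝ) k l - e k * e l) - d1 k * d1 l) / d)
    (hg : ∀ k l, g k l = (r1 k + d1 k) * (r1 l + d1 l) + F * (R k l + D k l))
    (hdet : IsUnit g.det)
    (hC : ∀ j k l, C j k l = (1 / 2) *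
      ((ρ * d1 j - d * r1 j) * (R k l / ρ - D k l / d)
      + (ρ * d1 k - d * r1 k) * (R j l / ρ - D j l / d)
      + (ρ * d1 l - d * r1 l) * (R j k / ρ - D j k / d)))
    (κ : ℝ) (hκ : κ = (n : ℝ) + 1 - ((n : ℝ) - 2) * F * (F - d) * c ^ 2 /
        (d * (d + (F - d) * c ^ 2))) (hκ0 : κ ≠ 0) (j k l : Fin n) :
    C j k l - (1 / κ) *
      ((∑ p, ∑ q, g⁻¹ p q * C j p q) * (F * (R k l + D k l) - F ^ 2 / d * D k l)
      + (∑ p, ∑ q, g⁻¹ p q * C k p q) * (F * (R l j + D l j) - F ^ 2 / d * D l j)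
      + (∑ p, ∑ q, g⁻¹ p q * C l p q) * (F * (R j k + D j k) - F ^ 2 / d * D j k)) = 0 := by
  have hd0 : d ≠ 0 := by rw [hd]; exact mul_ne_zero hc hσ
  -- `t` is the unit vector orthogonal to `y` in the plane spanned by `b` and `y`.
  set t : Fin n → ℝ := ρ⁻¹ • (σ • e - a • s) with ht
  set Q : Matrix (Fin n) (Fin n) ℝ := 1 - vecMulVec e e - vecMulVec s s with hQ
  have yv : y = a • e + σ • s := funext fun k => by simp [hy]
  have se : s ⬝ᵥ e = 0 := by rw [dotProduct_comm, es]
  have hQe : Q *ᵥ e = 0 := by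
    rw [hQ]; simp [Matrix.sub_mulVec, Matrix.vecMulVec_mulVec, ee, se]
  have hQs : Q *ᵥ s = 0 := by
    rw [hQ]; simp [Matrix.sub_mulVec, Matrix.vecMulVec_mulVec, ss, es]
  have hQT : Qᵀ = Q := by rw [hQ]; simp [Matrix.transpose_vecMulVec]
  have Qy : Q *ᵥ y = 0 := by
    rw [yv, Matrix.mulVec_add, Matrix.mulVec_smul, Matrix.mulVec_smul, hQe, hQs]; simp
  have Qt : Q *ᵥ t = 0 := by
    rw [ht, Matrix.mulVec_smul, Matrix.mulVec_sub, Matrix.mulVec_smul, Matrix.mulVec_smul, hQe,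
      hQs]; simp
  have tt : t ⬝ᵥ t = 1 := by
    rw [ht]
    simp only [dotProduct_smul, smul_dotProduct, dotProduct_sub, sub_dotProduct, ee, ss, es, se,
      smul_eq_mul]
    field_simp
    linarith
  have ty : t ⬝ᵥ y = 0 := by
    rw [ht, yv]
    simp only [dotProduct_smul, smul_dotProduct, dotProduct_add, sub_dotProduct, ee, ss, es, se,
      smul_eq_mul]
    ring
  have ψy : (r1 + d1) ⬝ᵥ y = F := by
    have h1 : r1 = ρ⁻¹ • y := funext fun k => by simp [hr1]; ring
    have h2 : d1 = c • s := funext fun k => by simp [hd1]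
    rw [h1, h2, hF, hd, yv]
    simp only [dotProduct_smul, smul_dotProduct, dotProduct_add, add_dotProduct, ee, ss, es, se,
      smul_eq_mul]
    field_simp
    linear_combination -hρ2
  have tk : ∀ k, t k = (σ * e k - a * s k) / ρ := fun k => by
    rw [ht]; simp; ring
  have Qk : ∀ k l, Q k l = (1 : Matrix (Fin n) (Fin n) ℝ) k l - e k * e l - s k * s l :=
    fun k l => by rw [hQ]; simp [Matrix.vecMulVec_apply]
  have R' : ∀ k l, R k l = (Q k l + t k * t l) / ρ := fun k l => by
    rw [hR, Qk, tk, tk, hr1, hr1, hy, hy]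
    field_simp
    linear_combination (e k * e l + s k * s l) * hρ2
  have D' : ∀ k l, D k l = c / σ * Q k l := fun k l => by
    rw [hD, Qk, hd1, hd1, hd]
    field_simp
  -- The covector of the Cartan torsion is a multiple of `t`; it vanishes when `y ⊥ b`.
  have m' : ∀ k, ρ * d1 k - d * r1 k = -(c * a) * t k := fun k => by
    rw [hd1, hr1, hy, tk, hd]
    field_simp
    linear_combination s k * hρ2
  set μ : ℝ := F * (1 / ρ + c / σ) with hμ
  set ν : ℝ := 1 / ρ ^ 2 - 1 / σ ^ 2 with hν
  have hσc : σ + c * ρ ≠ 0 := fun h => hD0 (by rw [hd]; linear_combination c * h)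
  have hμ0 : μ ≠ 0 := by
    have : μ = F * (σ + c * ρ) / (ρ * σ) := by rw [hμ]; field_simp
    rw [this]; positivity
  set T : Matrix (Fin n) (Fin n) ℝ := ν • Q + (1 / ρ ^ 2) • vecMulVec t t with hT
  have T' : ∀ k l, R k l / ρ - D k l / d = T k l := fun k l => by
    rw [R', D', hT, hν, hd]
    simp [Matrix.vecMulVec_apply]
    field_simp
    ring
  have g' : g = vecMulVec (r1 + d1) (r1 + d1) + μ • Q + (F / ρ) • vecMulVec t t := by
    ext k l
    rw [hg, R', D', hμ]
    simp [Matrix.vecMulVec_apply]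
    ring
  obtain ⟨i1, i2, i3⟩ := inverse_contractions g Q T t y (r1 + d1) F ρ μ ν g' hT hQT Qy Qt tt ty ψy
    hF0 hρ hμ0 hdet
  have C' : ∀ j k l, C j k l = -(c * a) / 2 * (t j * T k l + t k * T j l + t l * T j k) :=
    fun j k l => by rw [hC, m', m', m', T', T', T']; ring
  have I' : ∀ j, ∑ p, ∑ q, g⁻¹ p q * C j p q = -(c * a) / (2 * ρ * F) * κ * t j := fun j => by
    have h : ∑ p, ∑ q, g⁻¹ p q * C j p q = -(c * a) / 2 * (t j * (∑ p, ∑ q, g⁻¹ p q * T p q)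
        + (∑ p, ∑ q, g⁻¹ p q * (t p * T j q)) + (∑ p, ∑ q, g⁻¹ p q * (t q * T j p))) := by
      simp only [Finset.mul_sum, ← Finset.sum_add_distrib]
      refine Finset.sum_congr rfl fun k _ => Finset.sum_congr rfl fun l _ => ?_
      rw [C']; ring
    have hFd : F - d = ρ := by rw [hF]; ring
    have hσc' : σ + ρ * c ≠ 0 := by rwa [mul_comm ρ c]
    have hκ' : κ = ρ * F * ((n - 2) * (ν / μ) + 3 / (ρ * F)) := by
      have e1 : ν / μ = (σ ^ 2 - ρ ^ 2) / (ρ * σ * F * (σ + c * ρ)) := by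
        rw [hν, hμ]; field_simp
      rw [hκ, e1, hFd, show d * (d + ρ * c ^ 2) = c ^ 2 * σ * (σ + c * ρ) by rw [hd]; ring]
      field_simp
      rw [hF, hd]
      ring
    rw [h, i1, i2, i3, hκ']
    field_simp
    ring
  have hh : ∀ k l, F * (R k l + D k l) - F ^ 2 / d * D k l = F * ρ * T k l := fun k l => by
    rw [← T', hF]
    field_simp
    ring
  have Rsymm : T l j = T j l := by
    rw [hT]
    have : Q l j = Q j l := congrFun (congrFun hQT j) l
    simp [Matrix.vecMulVec_apply, this, mul_comm]
  rw [I', I', I', hh, hh, hh, C', Rsymm]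
  field_simp
  ring

/-! ### The projection onto the complement of `b` -/

/-- The orthogonal projection `z ↦ z - (⟪b, z⟫ / ‖b‖²) b` onto `b^⊥`, for `b ≠ 0`; it is the identity
for `b = 0`. -/
noncomputable def projPerp {n : ℕ} (b : EuclideanSpace ℝ (Fin n)) :
    EuclideanSpace ℝ (Fin n) →L[ℝ] EuclideanSpace ℝ (Fin n) :=
  ContinuousLinearMap.id ℝ _ - ((‖b‖ ^ 2)⁻¹ • innerSL ℝ b).smulRight b

theorem projPerp_apply {n : ℕ} (b z : EuclideanSpace ℝ (Fin n)) :
    projPerp b z = z - (⟪b, z⟫ / ‖b‖ ^ 2) • b := by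
  simp [projPerp, div_eq_inv_mul]

theorem inner_projPerp {n : ℕ} {b : EuclideanSpace ℝ (Fin n)} (hb : ‖b‖ ≠ 0)
    (x z : EuclideanSpace ℝ (Fin n)) :
    ⟪projPerp b x, projPerp b z⟫ = ⟪x, z⟫ - ⟪b, x⟫ * ⟪b, z⟫ / ‖b‖ ^ 2 := by
  simp only [projPerp_apply, inner_sub_left, inner_sub_right, real_inner_smul_left,
    real_inner_smul_right, real_inner_self_eq_norm_sq, real_inner_comm b x]
  field_simp
  ring

theorem dotProduct_eq_inner {n : ℕ} (x z : EuclideanSpace ℝ (Fin n)) :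
    (fun k => x k) ⬝ᵥ (fun k => z k) = ⟪x, z⟫ := by
  simp [dotProduct, PiLp.inner_apply, mul_comm]

/-! ### Vanishing of the characteristic tensor -/

/-- For a b-space Finsler norm `F = ρ + Δ` on ℝⁿ at `y ∉ ℝb` where
`(g_{jk}(y))` is invertible, `Δ + ‖b‖²ρ ≠ 0`, and
`κ_b = n + 1 - (n-2) F (F-Δ) ‖b‖² / (Δ (Δ + (F-Δ)‖b‖²)) ≠ 0`, the characteristic tensor
`B_{jkl} = C_{jkl} - (1/κ_b) Σ_{(jkl)} I_j (h_{kl} - (F²/Δ) Δ_{kl})` vanishes at `y`. -/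
theorem stmt18 {n : ℕ} (hn : 2 ≤ n)
    (b : EuclideanSpace ℝ (Fin n)) (hb0 : 0 < ‖b‖) (hb1 : ‖b‖ < 1)
    (Δ : EuclideanSpace ℝ (Fin n) → ℝ)
    (hΔ : (∀ z, Δ z = ‖b‖ * ‖z - (⟪b, z⟫ / ‖b‖^2) • b‖) ∨
          (∀ z, Δ z = -(‖b‖ * ‖z - (⟪b, z⟫ / ‖b‖^2) • b‖)))
    (F : EuclideanSpace ℝ (Fin n) → ℝ)
    (hF : ∀ z, F z = ‖z‖ + Δ z)
    (y : EuclideanSpace ℝ (Fin n))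
    (hy : y ∉ Submodule.span ℝ ({b} : Set (EuclideanSpace ℝ (Fin n))))
    (g : Matrix (Fin n) (Fin n) ℝ)
    (hg : ∀ j k, g j k = (1/2 : ℝ) * pd (pd (fun z => (F z)^2) j) k y)
    (hginv : IsUnit g.det)
    (hD0 : Δ y + ‖b‖^2 * ‖y‖ ≠ 0)
    (κb : ℝ)
    (hκdef : κb = (n : ℝ) + 1 - ((n : ℝ) - 2) * F y * (F y - Δ y) * ‖b‖^2 /
        (Δ y * (Δ y + (F y - Δ y) * ‖b‖^2)))
    (hκ : κb ≠ 0)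
    (j k l : Fin n) :
    Cart F y j k l
      - (1 / κb) *
        (meanC g F y j * (ang F y k l - ((F y)^2 / Δ y) * pd (pd Δ k) l y)
         + meanC g F y k * (ang F y l j - ((F y)^2 / Δ y) * pd (pd Δ l) j y)
         + meanC g F y l * (ang F y j k - ((F y)^2 / Δ y) * pd (pd Δ j) k y)) = 0 := by
  obtain ⟨c, hc2, hΔc⟩ : ∃ c : ℝ, c ^ 2 = ‖b‖ ^ 2 ∧ ∀ z, Δ z = c * ‖projPerp b z‖ := by
    rcases hΔ with h | h
    · exact ⟨‖b‖, rfl, fun z => by rw [h, projPerp_apply]⟩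
    · exact ⟨-‖b‖, by ring, fun z => by rw [h, projPerp_apply]; ring⟩
  have hβ : ‖b‖ ≠ 0 := hb0.ne'
  have hc : c ≠ 0 := fun h => by
    rw [h] at hc2; exact hβ (pow_eq_zero_iff two_ne_zero |>.1 (by linarith))
  have hPy : projPerp b y ≠ 0 := fun h => hy (by
    rw [projPerp_apply, sub_eq_zero] at h
    rw [h]; exact Submodule.smul_mem _ _ (Submodule.mem_span_singleton_self b))
  -- The open set on which both `ρ` and `Δ` are smooth and nonzero.
  set U : Set (EuclideanSpace ℝ (Fin n)) := {z | projPerp b z ≠ 0} with hUdef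
  have hU : IsOpen U := isOpen_ne_fun (projPerp b).continuous continuous_const
  have hU0 : ∀ z ∈ U, z ≠ 0 := fun z hz h => hz (by rw [h, map_zero])
  have hr := fun z (hz : z ∈ U) => pd_cnorm 1
    (ContinuousLinearMap.id ℝ (EuclideanSpace ℝ (Fin n))) (fun z => ‖z‖) (fun z => by simp) z
    (hU0 z hz)
  have hd := fun z (hz : z ∈ U) => pd_cnorm c (projPerp b) Δ hΔc z hz
  obtain ⟨f1, f2, f3, f4, f5⟩ := cartan_formula hU (fun z => ‖z‖) Δ F _ _ hF
    (fun z hz => norm_ne_zero_iff.2 (hU0 z hz)) (fun z hz => (hr z hz).1)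
    (fun z hz => (hr z hz).2)
    (fun z hz => by rw [hΔc]; exact mul_ne_zero hc (norm_ne_zero_iff.2 hz))
    (fun z hz => (hd z hz).1) (fun z hz => (hd z hz).2) y hPy
  have hσ : ‖projPerp b y‖ ≠ 0 := norm_ne_zero_iff.2 hPy
  have hρ : ‖y‖ ≠ 0 := norm_ne_zero_iff.2 (hU0 y hPy)
  have hσ2 : ‖projPerp b y‖ ^ 2 = ‖y‖ ^ 2 - (⟪b, y⟫ / ‖b‖) ^ 2 := by
    rw [← real_inner_self_eq_norm_sq, inner_projPerp hβ, real_inner_self_eq_norm_sq]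
    ring
  -- `|Δ| ≤ ‖b‖ ρ < ρ`.
  have hF0 : F y ≠ 0 := by
    have hle : ‖projPerp b y‖ ≤ ‖y‖ :=
      abs_le_of_sq_le_sq' (by rw [hσ2]; nlinarith [sq_nonneg (⟪b, y⟫ / ‖b‖)]) (norm_nonneg _) |>.2
    have hcabs : |c| < 1 := by
      rw [← abs_of_pos hb0] at hb1
      rwa [(sq_eq_sq_iff_abs_eq_abs _ _).1 hc2]
    have hpos : 0 < ‖y‖ := lt_of_le_of_ne (norm_nonneg _) (Ne.symm hρ)
    have hσpos := norm_pos_iff.2 hPy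
    have : -1 * ‖projPerp b y‖ < c * ‖projPerp b y‖ :=
      mul_lt_mul_of_pos_right (neg_lt_of_abs_lt hcabs) hσpos
    rw [hF, hΔc]
    exact ne_of_gt (by linarith)
  have he : ∀ k, ⟪EuclideanSpace.single k (1 : ℝ), y⟫ = y k := fun k => by
    simp [EuclideanSpace.inner_single_left]
  have hbe : ∀ k, ⟪b, EuclideanSpace.single k (1 : ℝ)⟫ = b k := fun k => by
    simp [EuclideanSpace.inner_single_right]
  have hee : ∀ k l : Fin n, ⟪EuclideanSpace.single k (1 : ℝ), EuclideanSpace.single l (1 : ℝ)⟫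
      = (1 : Matrix (Fin n) (Fin n) ℝ) k l := fun k l => by
    simp [EuclideanSpace.inner_single_left, Matrix.one_apply]
  have hPk : ∀ k, projPerp b y k = y k - ⟪b, y⟫ / ‖b‖ ^ 2 * b k := fun k => by
    rw [projPerp_apply]; simp
  have hbP : ⟪b, projPerp b y⟫ = 0 := by
    rw [projPerp_apply, inner_sub_right, real_inner_smul_right, real_inner_self_eq_norm_sq]
    field_simp
    ring
  have key := pointwise_identity (fun k => (‖b‖⁻¹ • b) k)
    (fun k => (‖projPerp b y‖⁻¹ • projPerp b y) k) (fun k => y k)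
    (fun k => pd (fun z => ‖z‖) k y) (fun k => pd Δ k y) (⟪b, y⟫ / ‖b‖) ‖projPerp b y‖ ‖y‖ c (Δ y)
    (F y) g (fun k l => pd (pd (fun z => ‖z‖) k) l y) (fun k l => pd (pd Δ k) l y) (Cart F y)
    (by rw [dotProduct_eq_inner, real_inner_smul_left, real_inner_smul_right,
          real_inner_self_eq_norm_sq]; field_simp)
    (by rw [dotProduct_eq_inner, real_inner_smul_left, real_inner_smul_right,
          real_inner_self_eq_norm_sq]; field_simp)
    (by rw [dotProduct_eq_inner, real_inner_smul_left, real_inner_smul_right, hbP]; simp)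
    (fun k => by simp [hPk]; field_simp; ring)
    (by rw [hσ2]; ring) hρ hσ hc (hΔc y) (hF y) hF0 (by rwa [hc2])
    (fun k => by rw [(hr y hPy).2 k]; simp [he])
    (fun k => by
      rw [(hd y hPy).2 k]
      simp only [smul_apply, ContinuousLinearMap.comp_apply, innerSL_apply_apply, smul_eq_mul,
        inner_projPerp hβ, he, hbe, PiLp.smul_apply, hPk]
      rw [hΔc]
      field_simp)
    (fun k l => by
      rw [f3]; congr 2
      simp only [smul_apply, ContinuousLinearMap.comp_apply, innerSL_apply_apply, smul_eq_mul,
        ContinuousLinearMap.id_apply, hee]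
      ring)
    (fun k l => by
      rw [f4]; congr 2
      simp only [smul_apply, ContinuousLinearMap.comp_apply, innerSL_apply_apply, smul_eq_mul,
        inner_projPerp hβ, hee, hbe, PiLp.smul_apply]
      field_simp)
    (fun k l => by rw [hg, f2]; ring) hginv f5 κb (by rw [hκdef, hc2]) hκ j k l
  simpa only [meanC, ang, f1] using key
end

section
/- Let s be a symmetric positive semidefinite bilinear form on ℝ^n all of whose eigenvalues lie in [0,1), set ρ(y) = ‖y‖, σ(y) = √(s(y,y)), and F = ρ − σ. Then at every y with σ(y) ≠ 0 (so y ≠ 0), the fundamental tensor is given by g_{jk} = (F/ρ) δ_{jk} + ρσ (ρ_j/ρ − σ_j/σ)(ρ_k/ρ − σ_k/σ) − (F/σ) s_{jk}, where s_{jk} = s(e_j, e_k) are the components of s in the standard basis. -/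
/-!
Both `‖z‖` and `√(s z z)` have the form `N z = √(b z z)` for a continuous symmetric bilinear form
`b`, namely the inner product and `s`. Where `b z z ≠ 0` the derivative of `N` is `b z · / N z`
(`hasFDerivAt_sqrt_form`). Hence, on the open set where both forms are nonzero, `(ρ - σ)²` has
`j`-th partial derivative `2 (ρ - σ) (⟪z, e_j⟫ / ρ - s z e_j / σ)`. The quotient rule applied to
this explicit expression gives the second derivatives, and what remains is field arithmetic in
`ρ`, `σ`, `⟪y, e_j⟫`, `⟪y, e_k⟫`, `s y e_j`, `s y e_k`. The form `s` is nonzero at `y` by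
hypothesis, and `y ≠ 0` because `s 0 0 = 0`.
-/

open scoped RealInnerProductSpace

section Aux

variable {E : Type*} [NormedAddCommGroup E] [NormedSpace ℝ E]

/-- The function `√(b z z)` has derivative `b y · / √(b y y)` at a point where `b y y ≠ 0`. -/
lemma hasFDerivAt_sqrt_form (b : E →L[ℝ] E →L[ℝ] ℝ) (hb : ∀ u v, b u v = b v u) {y : E}
    (hy : b y y ≠ 0) :
    HasFDerivAt (fun z => √(b z z)) ((√(b y y))⁻¹ • b y) y := by
  have h1 : HasFDerivAt (fun z => b z z) ((2 : ℝ) • b y) y := by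
    refine (b.hasFDerivAt.clm_apply (hasFDerivAt_id y)).congr_fderiv ?_
    ext v
    simp [hb v y, two_mul]
  refine (h1.sqrt hy).congr_fderiv ?_
  ext v
  simp only [smul_apply, smul_eq_mul]
  ring

/-- Quotient rule for the components `b z e / √(b z z)` of the derivative of `√(b z z)`. -/
lemma hasFDerivAt_form_div_sqrt (b : E →L[ℝ] E →L[ℝ] ℝ) (hb : ∀ u v, b u v = b v u) {y : E}
    (hy : 0 < b y y) (e : E) :
    HasFDerivAt (fun z => b z e / √(b z z))
      ((√(b y y))⁻¹ • b e - (b y e / √(b y y) ^ 3) • b y) y := by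
  have h0 : √(b y y) ≠ 0 := (Real.sqrt_pos.2 hy).ne'
  have h1 : HasFDerivAt (fun z => b z e) (b e) y := by
    simpa only [hb _ e] using (b e).hasFDerivAt (x := y)
  have h2 := h1.fun_mul ((hasDerivAt_inv h0).comp_hasFDerivAt y (hasFDerivAt_sqrt_form b hb hy.ne'))
  simp only [div_eq_mul_inv]
  refine h2.congr_fderiv ?_
  ext v
  simp only [smul_apply, sub_apply,
    add_apply, Function.comp_apply, smul_eq_mul]
  field_simp
  ring

/-- The derivative of `(√(a z z) - √(b z z))²` in direction `e`. -/
lemma fderiv_sq_sub_sqrt_form (a b : E →L[ℝ] E →L[ℝ] ℝ) (ha : ∀ u v, a u v = a v u)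
    (hb : ∀ u v, b u v = b v u) {y : E} (hay : a y y ≠ 0) (hby : b y y ≠ 0) (e : E) :
    fderiv ℝ (fun z => (√(a z z) - √(b z z)) ^ 2) y e =
      2 * ((√(a y y) - √(b y y)) * (a y e / √(a y y) - b y e / √(b y y))) := by
  rw [(((hasFDerivAt_sqrt_form a ha hay).fun_sub (hasFDerivAt_sqrt_form b hb hby)).pow
    2).fderiv]
  simp only [smul_apply, sub_apply, smul_eq_mul]
  simp
  ring

/-- The fundamental tensor of `√(a z z) - √(b z z)` for two symmetric bilinear forms. -/
lemma fundamental_tensor_sub_sqrt_form (a b : E →L[ℝ] E →L[ℝ] ℝ) (ha : ∀ u v, a u v = a v u)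
    (hb : ∀ u v, b u v = b v u) {y : E} (hay : 0 < a y y) (hby : 0 < b y y) (e f : E) :
    (1 / 2 : ℝ) * fderiv ℝ (fun w => fderiv ℝ (fun z => (√(a z z) - √(b z z)) ^ 2) w e) y f =
      (√(a y y) - √(b y y)) / √(a y y) * a e f
        + √(a y y) * √(b y y)
          * (a y e / √(a y y) / √(a y y) - b y e / √(b y y) / √(b y y))
          * (a y f / √(a y y) / √(a y y) - b y f / √(b y y) / √(b y y))
        - (√(a y y) - √(b y y)) / √(b y y) * b e f := by
  have hev : (fun w => fderiv ℝ (fun z => (√(a z z) - √(b z z)) ^ 2) w e) =ᶠ[nhds y]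
      fun z => 2 * ((√(a z z) - √(b z z)) * (a z e / √(a z z) - b z e / √(b z z))) := by
    have hca : ContinuousAt (fun z => a z z) y := by fun_prop
    have hcb : ContinuousAt (fun z => b z z) y := by fun_prop
    filter_upwards [hca.eventually_ne hay.ne', hcb.eventually_ne hby.ne'] with z hz1 hz2
    exact fderiv_sq_sub_sqrt_form a b ha hb hz1 hz2 e
  rw [hev.fderiv_eq,
    ((((hasFDerivAt_sqrt_form a ha hay.ne').fun_sub (hasFDerivAt_sqrt_form b hb hby.ne')).fun_mul
      ((hasFDerivAt_form_div_sqrt a ha hay e).fun_sub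
        (hasFDerivAt_form_div_sqrt b hb hby e))).const_mul 2).fderiv]
  have hp := (Real.sqrt_pos.2 hay).ne'
  have hq := (Real.sqrt_pos.2 hby).ne'
  simp only [smul_apply, sub_apply,
    add_apply, smul_eq_mul]
  generalize √(a y y) = p at *
  generalize √(b y y) = q at *
  field_simp
  ring

end Aux

/-- For a symmetric positive semidefinite bilinear form `s` on ℝⁿ with all
eigenvalues in `[0,1)`, `ρ(y) = ‖y‖`, `σ(y) = √(s(y,y))`, and `F = ρ - σ`, the
fundamental tensor at every `y` with `σ(y) ≠ 0` is
`g_{jk} = (F/ρ) δ_{jk} + ρσ (ρ_j/ρ - σ_j/σ)(ρ_k/ρ - σ_k/σ) - (F/σ) s_{jk}`. -/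
theorem stmt19 {n : ℕ}
    (s : EuclideanSpace ℝ (Fin n) →ₗ[ℝ] EuclideanSpace ℝ (Fin n) →ₗ[ℝ] ℝ)
    (hsymm : ∀ u v, s u v = s v u)
    (hpsd : ∀ y, 0 ≤ s y y)
    (stilde : EuclideanSpace ℝ (Fin n) →ₗ[ℝ] EuclideanSpace ℝ (Fin n))
    (hst : ∀ u v, s u v = ⟪stilde u, v⟫)
    (heig : ∀ μ : ℝ, Module.End.HasEigenvalue stilde μ → μ < 1)
    (y : EuclideanSpace ℝ (Fin n)) (hy : Real.sqrt (s y y) ≠ 0) :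
    ∀ j k, (1/2 : ℝ) *
        pd (pd (fun z => (‖z‖ - Real.sqrt (s z z))^2) j) k y =
      ((‖y‖ - Real.sqrt (s y y)) / ‖y‖) * (if j = k then 1 else 0)
        + ‖y‖ * Real.sqrt (s y y) *
            (pd (fun z => ‖z‖) j y / ‖y‖
              - pd (fun z => Real.sqrt (s z z)) j y / Real.sqrt (s y y)) *
            (pd (fun z => ‖z‖) k y / ‖y‖
              - pd (fun z => Real.sqrt (s z z)) k y / Real.sqrt (s y y))
        - ((‖y‖ - Real.sqrt (s y y)) / Real.sqrt (s y y)) *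
            s (EuclideanSpace.single j (1 : ℝ)) (EuclideanSpace.single k (1 : ℝ)) := by
  intro j k
  have hs : 0 < s y y := Real.sqrt_pos.1 (lt_of_le_of_ne (Real.sqrt_nonneg _) hy.symm)
  have hy0 : y ≠ 0 := by
    rintro rfl
    simp at hs
  -- In finite dimension the algebraic bilinear form `s` is continuous.
  let b : EuclideanSpace ℝ (Fin n) →L[ℝ] EuclideanSpace ℝ (Fin n) →L[ℝ] ℝ :=
    LinearMap.toContinuousLinearMap
      ((LinearMap.toContinuousLinearMap (𝕜 := ℝ) (E := EuclideanSpace ℝ (Fin n))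
        (F' := ℝ)).toLinearMap ∘ₗ s)
  let a : EuclideanSpace ℝ (Fin n) →L[ℝ] EuclideanSpace ℝ (Fin n) →L[ℝ] ℝ := innerSL ℝ
  have hbs : ∀ u v, s u v = b u v := fun _ _ => rfl
  have hai : ∀ u v, a u v = ⟪u, v⟫ := fun _ _ => rfl
  have han : ∀ z : EuclideanSpace ℝ (Fin n), ‖z‖ = √(a z z) := fun z => by
    rw [hai, real_inner_self_eq_norm_sq, Real.sqrt_sq (norm_nonneg z)]
  have ha : ∀ u v, a u v = a v u := fun u v => real_inner_comm v u
  have hb : ∀ u v, b u v = b v u := hsymm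
  have hay : 0 < a y y := real_inner_self_pos.2 hy0
  have hby : 0 < b y y := hs
  have ha_delta : (if j = k then (1 : ℝ) else 0) =
      a (EuclideanSpace.single j 1) (EuclideanSpace.single k 1) := by
    simp [hai, EuclideanSpace.inner_single_left]
  simp only [han, hbs, ha_delta]
  unfold pd
  rw [fundamental_tensor_sub_sqrt_form a b ha hb hay hby,
    (hasFDerivAt_sqrt_form a ha hay.ne').fderiv, (hasFDerivAt_sqrt_form b hb hby.ne').fderiv]
  simp only [smul_apply, smul_eq_mul, div_eq_inv_mul]
end
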